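/- There is an absolute constant c₀ such that for all n, k ∈ ℕ there exists a bounded linear operator T : ℓ_∞^{m} → ℓ_2^n with m = ⌊n^{1 + ln k}⌋ and π_1(T) > 0 satisfying π_1^k(T) ≤ c₀ · √((1 + ln k)/n) · π_1(T). -/

import Mathlib

open scoped ENNReal NNReal BigOperators

noncomputable section

/-- The `ℓ_p`-sum `(∑ i, f i ^ p) ^ (1/p)` of a finite family in `ℝ≥0∞`,
with the usual sup-modification for `p = ∞`. -/
def eSum (p : ℝ≥0∞) {ι : Type*} [Fintype ι] (f : ι → ℝ≥0∞) : ℝ≥0∞ :=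
  if p = ∞ then ⨆ i, f i else (∑ i, f i ^ p.toReal) ^ (1 / p.toReal)

/-- The weak `ℓ_q`-norm of a finite family of vectors:
`sup { (∑ k |⟨x_k, x*⟩|^q)^(1/q) : x* in the unit ball of the dual }`. -/
def weakLq (q : ℝ≥0∞) {X : Type*} [NormedAddCommGroup X] [NormedSpace ℝ X]
    {n : ℕ} (x : Fin n → X) : ℝ≥0∞ :=
  ⨆ f : {f : X →L[ℝ] ℝ // ‖f‖ ≤ 1}, eSum q fun k => ENNReal.ofReal |f.1 (x k)|

/-- The `(p,q)`-summing norm of `T` with respect to `n` vectors. -/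
def piN (p q : ℝ≥0∞) {X Y : Type*} [NormedAddCommGroup X] [NormedSpace ℝ X]
    [NormedAddCommGroup Y] [NormedSpace ℝ Y] (n : ℕ) (T : X →L[ℝ] Y) : ℝ≥0∞ :=
  ⨆ x : {x : Fin n → X // weakLq q x ≤ 1}, eSum p fun k => ENNReal.ofReal ‖T (x.1 k)‖

/-- The `(p,q)`-summing norm of `T`. -/
def piPQ (p q : ℝ≥0∞) {X Y : Type*} [NormedAddCommGroup X] [NormedSpace ℝ X]
    [NormedAddCommGroup Y] [NormedSpace ℝ Y] (T : X →L[ℝ] Y) : ℝ≥0∞ :=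
  ⨆ n : ℕ, piN p q n T

/-- `T` has rank at most `n`: its range is a finite-dimensional subspace of
dimension at most `n`. -/
def RankLE {X Y : Type*} [NormedAddCommGroup X] [NormedSpace ℝ X]
    [NormedAddCommGroup Y] [NormedSpace ℝ Y] (T : X →L[ℝ] Y) (n : ℕ) : Prop :=
  FiniteDimensional ℝ (LinearMap.range (T : X →ₗ[ℝ] Y)) ∧
    Module.finrank ℝ (LinearMap.range (T : X →ₗ[ℝ] Y)) ≤ n

/-- The average of `‖∑ k, ε k • x k‖²` over all `2^n` sign choices `ε ∈ {-1,1}^n`. -/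
def radAvg {X : Type*} [NormedAddCommGroup X] [NormedSpace ℝ X] {n : ℕ}
    (x : Fin n → X) : ℝ :=
  (∑ ε : Fin n → Bool, ‖∑ k, (if ε k then (1 : ℝ) else -1) • x k‖ ^ 2) / 2 ^ n

/-- The Rademacher cotype `q` constant of `T` with respect to `n` vectors. -/
def cotypeN (q : ℝ) {X Y : Type*} [NormedAddCommGroup X] [NormedSpace ℝ X]
    [NormedAddCommGroup Y] [NormedSpace ℝ Y] (n : ℕ) (T : X →L[ℝ] Y) : ℝ≥0∞ :=
  ⨆ x : {x : Fin n → X // Real.sqrt (radAvg x) ≤ 1},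
    (∑ k, ENNReal.ofReal ‖T (x.1 k)‖ ^ q) ^ (1 / q)

/-- The Rademacher cotype `q` constant of `T`. -/
def cotype (q : ℝ) {X Y : Type*} [NormedAddCommGroup X] [NormedSpace ℝ X]
    [NormedAddCommGroup Y] [NormedSpace ℝ Y] (T : X →L[ℝ] Y) : ℝ≥0∞ :=
  ⨆ n : ℕ, cotypeN q n T


def sg (b : Bool) : ℝ := if b then 1 else -1

lemma sg_sq (b : Bool) : sg b ^ 2 = 1 := by cases b <;> simp [sg]

lemma exp_avg (n : ℕ) (v : Fin n → ℝ) :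
    ∑ ε : Fin n → Bool, Real.exp (∑ a, sg (ε a) * v a) ≤ 2 ^ n * Real.exp ((∑ a, v a ^ 2) / 2) := by
  have h1 : ∑ ε : Fin n → Bool, Real.exp (∑ a, sg (ε a) * v a)
      = ∏ a, ∑ b : Bool, Real.exp (sg b * v a) := by
    rw [Fintype.prod_sum]
    simp only [Real.exp_sum]
  rw [h1]
  have h2 : ∀ a, ∑ b : Bool, Real.exp (sg b * v a) = 2 * Real.cosh (v a) := by
    intro a
    simp [sg, Real.cosh_eq]; ring
  calc ∏ a, ∑ b : Bool, Real.exp (sg b * v a) ≤ ∏ a, (2 * Real.exp (v a ^ 2 / 2)) := by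
        apply Finset.prod_le_prod
        · intro a _; positivity
        · intro a _; rw [h2]; have := Real.cosh_le_exp_half_sq (v a); linarith
    _ = _ := by
        rw [Finset.prod_mul_distrib, ← Real.exp_sum, Finset.sum_div]; simp

lemma khin (n q : ℕ) (hq : 1 ≤ q) (u : Fin n → ℝ) (hu : ∑ a, u a ^ 2 ≤ 1) :
    ∑ ε : Fin n → Bool, (∑ a, sg (ε a) * u a) ^ (2 * q)
      ≤ 2 ^ n * (2 * (2 * q * Real.exp 1) ^ q) := by
  set l : ℝ := Real.sqrt (2 * q) with hl
  have hq0 : (0:ℝ) < q := by exact_mod_cast hq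
  have hl2 : l ^ 2 = 2 * q := Real.sq_sqrt (by positivity)
  have key : ∀ x : ℝ, (2 * q : ℝ) ^ q * x ^ (2*q) ≤
      (2 * q : ℝ) ^ (2 * q) * (Real.exp (l * x) + Real.exp (-(l * x))) := by
    intro x
    have h1 := Real.pow_div_factorial_le_exp (x := |l * x|) (abs_nonneg _) (2*q)
    have h2 : Real.exp |l * x| ≤ Real.exp (l * x) + Real.exp (-(l * x)) := by
      rcases abs_choice (l * x) with h | h <;> rw [h] <;> linarith [Real.exp_pos (l*x), Real.exp_pos (-(l*x))]
    rw [div_le_iff₀ (by positivity)] at h1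
    have h3 : |l * x| ^ (2*q) = (2 * q : ℝ) ^ q * x ^ (2*q) := by
      rw [pow_mul, sq_abs, mul_pow, hl2, mul_pow, pow_mul]
    rw [h3] at h1
    have h4 : ((2*q).factorial : ℝ) ≤ (2 * q : ℝ) ^ (2 * q) := by
      have := Nat.factorial_le_pow (2*q)
      exact_mod_cast this
    calc _ ≤ _ := h1
      _ ≤ (Real.exp (l * x) + Real.exp (-(l * x))) * (2 * q : ℝ) ^ (2 * q) := by gcongr
      _ = _ := by ring
  have hexp : ∀ t : ℝ, t ^ 2 = 2 * q →
      ∑ ε : Fin n → Bool, Real.exp (t * ∑ a, sg (ε a) * u a) ≤ 2 ^ n * Real.exp 1 ^ q := by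
    intro t ht
    have := exp_avg n (fun a => t * u a)
    have e1 : ∀ ε : Fin n → Bool, ∑ a, sg (ε a) * (t * u a) = t * ∑ a, sg (ε a) * u a := by
      intro ε; rw [Finset.mul_sum]; apply Finset.sum_congr rfl; intros; ring
    simp only [e1] at this
    refine this.trans ?_
    rw [← Real.exp_nat_mul]
    gcongr
    simp only [mul_pow, ← Finset.mul_sum, ht]
    nlinarith
  have hA := hexp l hl2
  have hB := hexp (-l) (by rw [neg_sq, hl2])
  have hS : (2 * q : ℝ) ^ q * ∑ ε : Fin n → Bool, (∑ a, sg (ε a) * u a) ^ (2 * q)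
      ≤ (2 * q : ℝ) ^ (2*q) * (2 ^ n * Real.exp 1 ^ q + 2 ^ n * Real.exp 1 ^ q) := by
    rw [Finset.mul_sum]
    calc _ ≤ ∑ ε : Fin n → Bool, (2 * q : ℝ) ^ (2 * q) *
          (Real.exp (l * ∑ a, sg (ε a) * u a) + Real.exp (-l * ∑ a, sg (ε a) * u a)) := by
          apply Finset.sum_le_sum; intro ε _; rw [neg_mul]; exact key _
      _ ≤ _ := by
          rw [← Finset.mul_sum, Finset.sum_add_distrib]
          gcongr
  have hp : (0:ℝ) < (2 * q : ℝ) ^ q := by positivity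
  refine le_of_mul_le_mul_left (hS.trans (le_of_eq ?_)) hp
  rw [mul_pow (2 * q : ℝ) (Real.exp 1)]; ring

lemma cara (n q m : ℕ) (hn : 0 < n) (hq : 1 ≤ q) (hm : n ^ (2 * q) + 1 ≤ m) :
    ∃ (w : Fin m → ℝ) (g : Fin m → Fin n → ℝ), (∀ i, 0 ≤ w i) ∧ ∑ i, w i = 1 ∧
      (∀ i, ∑ a, g i a ^ 2 = 1) ∧ ∀ u : Fin n → ℝ, ∑ a, u a ^ 2 ≤ 1 →
        ∑ i, w i * (∑ a, g i a * u a) ^ (2 * q) ≤ 2 * (2 * q * Real.exp 1 / n) ^ q := by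
  let Φ : (Fin n → Bool) → ((Fin (2 * q) → Fin n) → ℝ) := fun ε f => ∏ t, sg (ε (f t))
  have hmem : ∑ ε : Fin n → Bool, ((1:ℝ) / 2 ^ n) • Φ ε ∈ convexHull ℝ (Set.range Φ) := by
    apply (convex_convexHull ℝ (Set.range Φ)).sum_mem
    · intros; positivity
    · simp
    · intro ε _; exact subset_convexHull _ _ ⟨ε, rfl⟩
  obtain ⟨ι, _, z, w, hz, hai, hw, hw1, hsum⟩ := eq_pos_convex_span_of_mem_convexHull hmem
  have hcard : Fintype.card ι ≤ m := by
    refine (hai.card_le_finrank_succ.trans ?_).trans hm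
    gcongr
    refine (Submodule.finrank_le _).trans ?_
    simp
  have hch : ∀ i, ∃ ε, Φ ε = z i := fun i => hz ⟨i, rfl⟩
  choose ε hε using hch
  obtain ⟨e⟩ : Nonempty (ι ↪ Fin m) := by
    apply Function.Embedding.nonempty_of_card_le; simpa using hcard
  have hι : Nonempty ι := by
    by_contra h
    rw [not_nonempty_iff] at h
    simp at hw1
  have hn0 : (0:ℝ) < n := by exact_mod_cast hn
  have hpull : ∀ F : ι → ℝ, ∀ G : Fin m → ℝ, (∀ i, G (e i) = F i) →
      (∀ j, j ∉ Set.range e → G j = 0) → ∑ j, G j = ∑ i, F i := by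
    intro F G h1 h2
    simp only [← h1]
    symm
    exact Fintype.sum_of_injective e e.injective _ _ h2 (fun _ => rfl)
  refine ⟨Function.extend e w 0, fun j a => sg (ε (Function.invFun e j) a) / Real.sqrt n, ?_, ?_, ?_, ?_⟩
  · intro j
    by_cases h : ∃ i, e i = j
    · obtain ⟨i, rfl⟩ := h
      rw [e.injective.extend_apply]; exact (hw i).le
    · rw [Function.extend_apply' _ _ _ h]; simp
  · rw [hpull w (Function.extend e w 0) (fun i => e.injective.extend_apply _ _ _) (fun j h => Function.extend_apply' _ _ _ (by simpa using h)), hw1]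
  · intro j
    simp only [div_pow, sg_sq, Real.sq_sqrt hn0.le]
    simp; field_simp
  · intro u hu
    rw [hpull (fun i => w i * (∑ a, sg (ε i a) / Real.sqrt n * u a) ^ (2 * q)) _
      (fun i => by rw [e.injective.extend_apply]; simp only [Function.leftInverse_invFun e.injective i])
      (fun j h => by rw [Function.extend_apply' _ _ _ (by simpa using h)]; simp)]
    have hexpand : ∀ η : Fin n → Bool, (∑ a, sg (η a) * u a) ^ (2 * q) =
        ∑ f : Fin (2*q) → Fin n, Φ η f * ∏ t, u (f t) := by
      intro η
      rw [Fintype.sum_pow]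
      simp only [Finset.prod_mul_distrib, Φ]
    have h1 : ∑ i, w i * (∑ a, sg (ε i a) * u a) ^ (2 * q) =
        1 / 2 ^ n * ∑ η : Fin n → Bool, (∑ a, sg (η a) * u a) ^ (2 * q) := by
      simp only [hexpand, Finset.mul_sum]
      rw [Finset.sum_comm, Finset.sum_comm (s := (Finset.univ : Finset (Fin n → Bool)))]
      apply Finset.sum_congr rfl
      intro f _
      have := congrFun hsum f
      simp only [Finset.sum_apply, Pi.smul_apply, smul_eq_mul, ← hε] at this
      simp only [← mul_assoc, ← Finset.sum_mul]
      rw [this]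
    have h2 : ∀ i, (∑ a, sg (ε i a) / Real.sqrt n * u a) ^ (2 * q) =
        (∑ a, sg (ε i a) * u a) ^ (2 * q) / n ^ q := by
      intro i
      have : ∑ a, sg (ε i a) / Real.sqrt n * u a = (∑ a, sg (ε i a) * u a) / Real.sqrt n := by
        rw [Finset.sum_div]; apply Finset.sum_congr rfl; intros; ring
      rw [this, div_pow, pow_mul (Real.sqrt n), Real.sq_sqrt hn0.le]
    simp only [h2, mul_div_assoc']
    rw [← Finset.sum_div, h1]
    have := khin n q hq u hu
    calc _ ≤ 1 / 2 ^ n * (2 ^ n * (2 * (2 * q * Real.exp 1) ^ q)) / (n:ℝ) ^ q := by gcongr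
      _ = _ := by rw [div_pow]; field_simp

lemma basis_case (n q m : ℕ) (hn : 0 < n) (hm : n ≤ m) (hq : 1 ≤ q) (h : n = 1 ∨ q = 1) :
    ∃ (w : Fin m → ℝ) (g : Fin m → Fin n → ℝ), (∀ i, 0 ≤ w i) ∧ ∑ i, w i = 1 ∧
      (∀ i, ∑ a, g i a ^ 2 = 1) ∧ ∀ u : Fin n → ℝ, ∑ a, u a ^ 2 ≤ 1 →
        ∑ i, w i * (∑ a, g i a * u a) ^ (2 * q) ≤ 2 * (2 * q * Real.exp 1 / n) ^ q := by
  obtain ⟨d, rfl⟩ := Nat.exists_eq_add_of_le hm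
  have hn0 : (0:ℝ) < n := by exact_mod_cast hn
  have he : (1:ℝ) ≤ Real.exp 1 := Real.one_le_exp (by norm_num)
  refine ⟨Fin.append (fun _ => 1 / (n:ℝ)) (fun _ => 0),
    Fin.append (fun i => Pi.single i 1) (fun _ => Pi.single ⟨0, hn⟩ 1), ?_, ?_, ?_, ?_⟩
  · intro i
    refine Fin.addCases (fun i => ?_) (fun i => ?_) i
    · simp
    · simp
  · rw [Fin.sum_univ_add]; simp; field_simp
  · intro i
    refine Fin.addCases (fun i => ?_) (fun i => ?_) i
    · simp [Pi.single_apply]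
    · simp [Pi.single_apply]
  · intro u hu
    rw [Fin.sum_univ_add]
    simp only [Fin.append_left, Fin.append_right, zero_mul, Finset.sum_const_zero, add_zero, Pi.single_apply, ite_mul, one_mul, Finset.sum_ite_eq', Finset.mem_univ, if_true]
    rcases h with rfl | rfl
    · simp at hu ⊢
      rw [pow_mul]
      have h1 : ((u 0) ^ 2) ^ q ≤ 1 := pow_le_one₀ (sq_nonneg _) (by simpa using hu)
      have h2 : (1:ℝ) ≤ (2 * q * Real.exp 1) ^ q := by
        apply one_le_pow₀
        have : (1:ℝ) ≤ q := by exact_mod_cast hq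
        nlinarith
      linarith
    · rw [← Finset.mul_sum]
      simp only [mul_one, Nat.cast_one, pow_one]
      calc _ ≤ 1 / (n:ℝ) * 1 := by gcongr
        _ ≤ _ := by
          rw [← mul_div_assoc, mul_one]; gcongr; linarith

lemma eSum_one {ι : Type*} [Fintype ι] (f : ι → ℝ≥0∞) : eSum 1 f = ∑ i, f i := by
  simp [eSum]

lemma mom_conclude (n k m q : ℕ) (hn : 0 < n) (hk : 0 < k) (hq : 1 ≤ q)
    (hkq : Real.log k ≤ 4 * q) (hqk : (2 * q : ℝ) ≤ 2 * (1 + Real.log k))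
    (w : Fin m → ℝ) (g : Fin m → Fin n → ℝ) (hw : ∀ i, 0 ≤ w i) (hw1 : ∑ i, w i = 1)
    (hmom : ∀ u : Fin n → ℝ, ∑ a, u a ^ 2 ≤ 1 →
        ∑ i, w i * (∑ a, g i a * u a) ^ (2 * q) ≤ 2 * (2 * q * Real.exp 1 / n) ^ q)
    (x : Fin k → Fin m → ℝ) (hx : ∀ i, ∑ j, |x j i| ≤ 1)
    (u : Fin k → Fin n → ℝ) (hu : ∀ j, ∑ a, u j a ^ 2 ≤ 1) :
    ∑ j, ∑ i, x j i * w i * (∑ a, g i a * u j a) ≤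
      Real.sqrt (2 * Real.exp 6) * Real.sqrt ((1 + Real.log k) / n) := by
  have hn0 : (0:ℝ) < n := by exact_mod_cast hn
  have hk0 : (0:ℝ) < k := by exact_mod_cast hk
  have hq1 : (1:ℝ) ≤ q := by exact_mod_cast hq
  set A : Fin m → Fin k → ℝ := fun i j => |∑ a, g i a * u j a| with hA
  have hA0 : ∀ i j, 0 ≤ A i j := fun i j => abs_nonneg _
  set M : Fin m → ℝ := fun i => ∑ j, |x j i| * A i j with hM
  have hM0 : ∀ i, 0 ≤ M i := fun i => Finset.sum_nonneg fun j _ => by positivity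
  have hkne : Nonempty (Fin k) := ⟨⟨0, hk⟩⟩
  have hMp : ∀ i, M i ^ (2*q) ≤ ∑ j, A i j ^ (2*q) := by
    intro i
    obtain ⟨j0, hj0⟩ := Finite.exists_max (A i)
    have : M i ≤ A i j0 := by
      calc M i ≤ ∑ j, |x j i| * A i j0 :=
            Finset.sum_le_sum fun j _ => mul_le_mul_of_nonneg_left (hj0 j) (abs_nonneg _)
        _ = (∑ j, |x j i|) * A i j0 := by rw [Finset.sum_mul]
        _ ≤ 1 * A i j0 := mul_le_mul_of_nonneg_right (hx i) (hA0 _ _)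
        _ = _ := one_mul _
    calc M i ^ (2*q) ≤ A i j0 ^ (2*q) := pow_le_pow_left₀ (hM0 i) this _
      _ ≤ _ := Finset.single_le_sum (f := fun j => A i j ^ (2*q))
          (fun j _ => pow_nonneg (hA0 i j) _) (Finset.mem_univ j0)
  have hS : ∑ j, ∑ i, x j i * w i * (∑ a, g i a * u j a) ≤ ∑ i, w i * M i := by
    rw [Finset.sum_comm]
    apply Finset.sum_le_sum
    intro i _
    rw [hM, Finset.mul_sum]
    apply Finset.sum_le_sum
    intro j _
    have h1 : x j i * (∑ a, g i a * u j a) ≤ |x j i| * A i j := by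
      rw [hA, ← abs_mul]; exact le_abs_self _
    calc _ = w i * (x j i * (∑ a, g i a * u j a)) := by ring
      _ ≤ _ := mul_le_mul_of_nonneg_left h1 (hw i)
  refine hS.trans ?_
  set S := ∑ i, w i * M i with hSd
  have hS0 : 0 ≤ S := Finset.sum_nonneg fun i _ => mul_nonneg (hw i) (hM0 i)
  have hSp : S ^ (2*q) ≤ k * (2 * (2 * q * Real.exp 1 / n) ^ q) := by
    calc S ^ (2*q) ≤ ∑ i, w i * M i ^ (2*q) :=
          Real.pow_arith_mean_le_arith_mean_pow _ _ _ (fun i _ => hw i) hw1 (fun i _ => hM0 i) _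
      _ ≤ ∑ i, w i * ∑ j, A i j ^ (2*q) :=
          Finset.sum_le_sum fun i _ => mul_le_mul_of_nonneg_left (hMp i) (hw i)
      _ = ∑ j, ∑ i, w i * (∑ a, g i a * u j a) ^ (2*q) := by
          simp only [Finset.mul_sum]
          rw [Finset.sum_comm]
          simp only [hA, (even_two_mul q).pow_abs]
      _ ≤ ∑ j : Fin k, 2 * (2 * q * Real.exp 1 / n) ^ q :=
          Finset.sum_le_sum fun j _ => hmom _ (hu j)
      _ = _ := by simp
  rw [← Real.sqrt_mul (by positivity)]
  apply Real.le_sqrt_of_sq_le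
  have hL : (0:ℝ) ≤ 1 + Real.log k := by linarith
  refine le_of_pow_le_pow_left₀ (n := q) (by omega) (by positivity) ?_
  rw [← pow_mul]
  refine hSp.trans ?_
  have hke : (k:ℝ) ≤ Real.exp 4 ^ q := by
    rw [← Real.exp_nat_mul, ← Real.log_le_iff_le_exp hk0]; linarith
  have h2e : (2:ℝ) ≤ Real.exp 1 ^ q := by
    rw [← Real.exp_nat_mul]
    have := Real.add_one_le_exp ((q:ℝ) * 1)
    linarith
  calc (k:ℝ) * (2 * (2 * q * Real.exp 1 / n) ^ q)
      ≤ Real.exp 4 ^ q * (Real.exp 1 ^ q * (2 * (1 + Real.log k) * Real.exp 1 / n) ^ q) := by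
        gcongr
    _ = _ := by
        rw [← mul_pow, ← mul_pow]
        congr 1
        have : Real.exp 6 = Real.exp 4 * Real.exp 1 * Real.exp 1 := by
          rw [← Real.exp_add, ← Real.exp_add]; norm_num
        rw [this]; ring

lemma choose_data (n k : ℕ) (hn : 0 < n) (hk : 0 < k) :
    ∃ (q : ℕ), 1 ≤ q ∧ Real.log k ≤ 4 * q ∧ (2 * q : ℝ) ≤ 2 * (1 + Real.log k) ∧
    ∃ (w : Fin ⌊(n : ℝ) ^ (1 + Real.log k)⌋₊ → ℝ)
      (g : Fin ⌊(n : ℝ) ^ (1 + Real.log k)⌋₊ → Fin n → ℝ), (∀ i, 0 ≤ w i) ∧ ∑ i, w i = 1 ∧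
      (∀ i, ∑ a, g i a ^ 2 = 1) ∧ ∀ u : Fin n → ℝ, ∑ a, u a ^ 2 ≤ 1 →
        ∑ i, w i * (∑ a, g i a * u a) ^ (2 * q) ≤ 2 * (2 * q * Real.exp 1 / n) ^ q := by
  have hlog : 0 ≤ Real.log k := Real.log_natCast_nonneg k
  have hn1 : (1:ℝ) ≤ n := by exact_mod_cast hn
  have hnm : n ≤ ⌊(n : ℝ) ^ (1 + Real.log k)⌋₊ := by
    apply Nat.le_floor
    calc (n:ℝ) = (n:ℝ) ^ (1:ℝ) := (Real.rpow_one _).symm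
      _ ≤ _ := Real.rpow_le_rpow_of_exponent_le hn1 (by linarith)
  by_cases h2 : Real.log k < 2
  · refine ⟨1, le_rfl, ?_, ?_, basis_case n 1 _ hn hnm le_rfl (Or.inr rfl)⟩
    · push_cast; linarith
    · push_cast; linarith
  · push Not at h2
    have hq1 : 1 ≤ ⌊Real.log k / 2⌋₊ := Nat.le_floor (by push_cast; linarith)
    have hqa : (⌊Real.log k / 2⌋₊ : ℝ) ≤ Real.log k / 2 := Nat.floor_le (by linarith)
    have hqb := Nat.lt_floor_add_one (Real.log k / 2)
    generalize ⌊Real.log k / 2⌋₊ = q at hq1 hqa hqb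
    have hq1' : (1:ℝ) ≤ q := by exact_mod_cast hq1
    refine ⟨q, hq1, by linarith, by linarith, ?_⟩
    by_cases hn' : n = 1
    · exact basis_case n q _ hn hnm hq1 (Or.inl hn')
    · apply cara n q _ hn hq1
      apply Nat.le_floor
      have hn2 : (2:ℝ) ≤ n := by
        have : 2 ≤ n := by omega
        exact_mod_cast this
      have h1 : (1:ℝ) ≤ (n:ℝ) ^ (2*q) := one_le_pow₀ hn1
      calc ((n ^ (2*q) + 1 : ℕ) : ℝ) = (n:ℝ) ^ (2*q) + 1 := by push_cast; ring
        _ ≤ (n:ℝ) ^ (2*q) * n := by nlinarith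
        _ = (n:ℝ) ^ (((2 * q + 1 : ℕ)) : ℝ) := by rw [Real.rpow_natCast, pow_succ]
        _ ≤ _ := Real.rpow_le_rpow_of_exponent_le hn1 (by push_cast; linarith)

lemma coord_le {m k : ℕ} (x : Fin k → PiLp ∞ (fun _ : Fin m => ℝ)) (hx : weakLq 1 x ≤ 1)
    (i : Fin m) : ∑ j, |x j i| ≤ 1 := by
  have hf : ‖(PiLp.proj ∞ (fun _ : Fin m => ℝ) i : PiLp ∞ (fun _ : Fin m => ℝ) →L[ℝ] ℝ)‖ ≤ 1 := by
    apply ContinuousLinearMap.opNorm_le_bound _ zero_le_one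
    intro y
    rw [one_mul]
    exact PiLp.norm_apply_le y i
  have h := (le_iSup (fun f : {f : PiLp ∞ (fun _ : Fin m => ℝ) →L[ℝ] ℝ // ‖f‖ ≤ 1} =>
    eSum 1 fun k => ENNReal.ofReal |f.1 (x k)|) ⟨_, hf⟩).trans hx
  simp only [eSum_one] at h
  rw [← ENNReal.ofReal_sum_of_nonneg (fun _ _ => abs_nonneg _)] at h
  simpa using h

lemma weak_basis (m : ℕ) :
    weakLq 1 (fun i : Fin m => (WithLp.toLp ∞ (Pi.single i 1) : PiLp ∞ (fun _ : Fin m => ℝ))) ≤ 1 := by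
  apply iSup_le
  rintro ⟨f, hf⟩
  rw [eSum_one, ← ENNReal.ofReal_sum_of_nonneg (fun _ _ => abs_nonneg _)]
  rw [ENNReal.ofReal_le_one]
  set b : Fin m → PiLp ∞ (fun _ : Fin m => ℝ) := fun i => WithLp.toLp ∞ (Pi.single i 1) with hb
  set s : Fin m → ℝ := fun i => SignType.sign (f (b i)) with hs
  have h1 : ∑ i, |f (b i)| = f (∑ i, s i • b i) := by
    rw [map_sum]
    apply Finset.sum_congr rfl
    intro i _
    rw [map_smul, smul_eq_mul]
    exact (sign_mul_self _).symm
  have h2 : ‖∑ i, s i • b i‖ ≤ 1 := by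
    have h3 : ∑ i, s i • b i = WithLp.toLp ∞ s := by
      ext a
      simp [hb, Pi.single_apply]
    rw [h3, PiLp.norm_toLp]
    rw [pi_norm_le_iff_of_nonneg zero_le_one]
    intro i
    simp only [hs]
    rcases SignType.sign (f (b i)) with _ | _ | _ <;> simp
  show ∑ i, |f (b i)| ≤ 1
  rw [h1]
  calc f (∑ i, s i • b i) ≤ ‖f (∑ i, s i • b i)‖ := Real.le_norm_self _
    _ ≤ ‖f‖ * ‖∑ i, s i • b i‖ := f.le_opNorm _
    _ ≤ 1 * 1 := by gcongr
    _ = 1 := one_mul _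

/-- there is an absolute constant `c₀` such that for all
`n, k ≥ 1` there is an operator `T : ℓ_∞^{⌊n^{1+ln k}⌋} → ℓ_2^n` with
`π_1(T) > 0` and `π_1^k(T) ≤ c₀ √((1 + ln k)/n) π_1(T)`. -/
theorem statement19 :
    ∃ c₀ : ℝ, 0 < c₀ ∧
      ∀ (n k : ℕ), 0 < n → 0 < k →
        ∃ T : PiLp ∞ (fun _ : Fin ⌊(n : ℝ) ^ (1 + Real.log k)⌋₊ => ℝ) →L[ℝ]
            EuclideanSpace ℝ (Fin n),
          0 < piPQ 1 1 T ∧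
          piN 1 1 k T ≤
            ENNReal.ofReal (c₀ * Real.sqrt ((1 + Real.log k) / n)) * piPQ 1 1 T := by
  refine ⟨Real.sqrt (2 * Real.exp 6), by positivity, ?_⟩
  intro n k hn hk
  obtain ⟨q, hq, hkq, hqk, w, g, hw, hw1, hg, hmom⟩ := choose_data n k hn hk
  generalize ⌊(n : ℝ) ^ (1 + Real.log k)⌋₊ = m at w g hw hw1 hg hmom ⊢
  let v : Fin m → EuclideanSpace ℝ (Fin n) := fun i => WithLp.toLp 2 (g i)
  have hv : ∀ i, ‖v i‖ = 1 := by
    intro i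
    rw [EuclideanSpace.norm_eq]
    simp [v, hg]
  let T : PiLp ∞ (fun _ : Fin m => ℝ) →L[ℝ] EuclideanSpace ℝ (Fin n) :=
    ∑ i, (PiLp.proj ∞ (fun _ : Fin m => ℝ) i : PiLp ∞ (fun _ : Fin m => ℝ) →L[ℝ] ℝ).smulRight
      (w i • v i)
  have hT : ∀ x, T x = ∑ i, x i • (w i • v i) := by
    intro x
    simp [T]
  have hTb : ∀ i, ‖T (WithLp.toLp ∞ (Pi.single i 1))‖ = w i := by
    intro i
    rw [hT]
    simp [Pi.single_apply, norm_smul, hv, abs_of_nonneg (hw i)]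
  have hpi : 1 ≤ piPQ 1 1 T := by
    refine le_trans ?_ (le_iSup _ m)
    refine le_trans ?_ (le_iSup _ ⟨_, weak_basis m⟩)
    rw [eSum_one]
    simp only [hTb]
    rw [← ENNReal.ofReal_sum_of_nonneg (fun i _ => hw i), hw1]
    simp
  refine ⟨T, lt_of_lt_of_le zero_lt_one hpi, ?_⟩
  refine le_trans ?_ (le_mul_of_one_le_right (zero_le) hpi)
  apply iSup_le
  rintro ⟨x, hx⟩
  rw [eSum_one, ← ENNReal.ofReal_sum_of_nonneg (fun _ _ => norm_nonneg _)]
  apply ENNReal.ofReal_le_ofReal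
  let u : Fin k → EuclideanSpace ℝ (Fin n) := fun j => ‖T (x j)‖⁻¹ • T (x j)
  have hu : ∀ j, ‖u j‖ ≤ 1 := by
    intro j
    simp only [u, norm_smul, norm_inv, norm_norm]
    exact inv_mul_le_one
  have hu2 : ∀ j, ∑ a, u j a ^ 2 ≤ 1 := by
    intro j
    have h := EuclideanSpace.real_norm_sq_eq (u j)
    rw [← h]
    exact pow_le_one₀ (norm_nonneg _) (hu j)
  have hnorm : ∀ j, ‖T (x j)‖ = ∑ i, x j i * w i * (∑ a, g i a * u j a) := by
    intro j
    have h1 : ‖T (x j)‖ = inner ℝ (u j) (T (x j)) := by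
      simp only [u]
      rw [real_inner_smul_left, real_inner_self_eq_norm_sq]
      by_cases h : ‖T (x j)‖ = 0
      · rw [h]; simp
      · field_simp
    rw [h1, hT, inner_sum]
    apply Finset.sum_congr rfl
    intro i _
    rw [inner_smul_right, inner_smul_right, ← mul_assoc]
    congr 1
  calc ∑ j, ‖T (x j)‖ = ∑ j, ∑ i, x j i * w i * (∑ a, g i a * u j a) :=
        Finset.sum_congr rfl fun j _ => hnorm j
    _ ≤ _ := mom_conclude n k m q hn hk hq hkq hqk w g hw hw1 hmom (fun j i => x j i)
        (coord_le x hx) (fun j a => u j a) hu2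

end
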